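/- Let w > 0 and define f(w, y) = ∑_{l=0}^∞ (2l+1)·P_l(y)/(l(l+1)+w) for y ∈ [-1, 1). Then f(w, y) → +∞ as y → 1⁻; equivalently, the Green's function G of the screened Poisson equation on the sphere diverges to -∞ as the angular separation γ tends to 0. -/

import Mathlib

open Filter Topology

/-- The Legendre polynomials `P l` on `ℝ`, i.e. the orthogonal polynomials on `[-1,1]`
normalized by `P l 1 = 1`, defined via the Bonnet recurrence
`P 0 y = 1`, `P 1 y = y`, `(n+2) • P (n+2) y = (2n+3) y P (n+1) y - (n+1) P n y`. -/
noncomputable def legendreP : ℕ → ℝ → ℝ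
  | 0, _ => 1
  | 1, y => y
  | (n + 2), y =>
      ((2 * (n : ℝ) + 3) * y * legendreP (n + 1) y - ((n : ℝ) + 1) * legendreP n y) / ((n : ℝ) + 2)

lemma legP_rec (n : ℕ) (y : ℝ) :
    ((n : ℝ) + 2) * legendreP (n + 2) y =
      (2 * (n : ℝ) + 3) * y * legendreP (n + 1) y - ((n : ℝ) + 1) * legendreP n y := by
  have h : ((n : ℝ) + 2) ≠ 0 := by positivity
  rw [legendreP]
  field_simp

lemma legP_zero (y : ℝ) : legendreP 0 y = 1 := by rw [legendreP]

lemma legP_one (y : ℝ) : legendreP 1 y = y := by rw [legendreP]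

lemma legP_at_one (n : ℕ) : legendreP n 1 = 1 ∧ legendreP (n + 1) 1 = 1 := by
  induction n with
  | zero => exact ⟨legP_zero 1, legP_one 1⟩
  | succ k ih =>
    refine ⟨ih.2, ?_⟩
    have h := legP_rec k 1
    rw [ih.1, ih.2] at h
    have h2 : ((k : ℝ) + 2) ≠ 0 := by positivity
    apply mul_left_cancel₀ h2
    rw [show k + 1 + 1 = k + 2 from rfl, h]; ring

lemma legP_cont (n : ℕ) : Continuous (legendreP n) ∧ Continuous (legendreP (n + 1)) := by
  induction n with
  | zero =>
    constructor
    · have : legendreP 0 = fun _ => 1 := by funext y; exact legP_zero y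
      rw [this]; fun_prop
    · have : legendreP (0 + 1) = fun y => y := by funext y; exact legP_one y
      rw [this]; fun_prop
  | succ k ih =>
    refine ⟨ih.2, ?_⟩
    have : legendreP (k + 1 + 1) = fun y => ((2 * (k : ℝ) + 3) * y * legendreP (k + 1) y
      - ((k : ℝ) + 1) * legendreP k y) / ((k : ℝ) + 2) := by
      funext y; rw [legendreP]
    rw [this]
    have h1 := ih.1
    have h2 := ih.2
    fun_prop

/-- `q n` is `y P_{n+1} - P_n`. -/
noncomputable def legQ (n : ℕ) (y : ℝ) : ℝ := y * legendreP (n + 1) y - legendreP n y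

lemma legP_step (n : ℕ) (y : ℝ) :
    legendreP (n + 2) y = y * legendreP (n + 1) y + legQ n y * ((n : ℝ) + 1) / ((n : ℝ) + 2) := by
  have h : ((n : ℝ) + 2) ≠ 0 := by positivity
  rw [legendreP, legQ]
  field_simp
  ring

lemma legQ_step (n : ℕ) (y : ℝ) :
    legQ (n + 1) y = y * (legQ n y * ((n : ℝ) + 1) / ((n : ℝ) + 2))
      - (1 - y ^ 2) * legendreP (n + 1) y := by
  rw [legQ, show n + 1 + 1 = n + 2 from rfl, legP_step]
  ring

lemma energy_le (n : ℕ) (y : ℝ) (hy : y ^ 2 < 1) :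
    (1 - y ^ 2) * legendreP (n + 1) y ^ 2 + legQ n y ^ 2 ≤ 1 - y ^ 2 := by
  induction n with
  | zero =>
    rw [legQ, legP_one, legP_zero]; nlinarith
  | succ k ih =>
    rw [legQ_step, show k + 1 + 1 = k + 2 from rfl, legP_step]
    set p := legendreP (k + 1) y
    set q := legQ k y
    set t : ℝ := q * ((k : ℝ) + 1) / ((k : ℝ) + 2) with ht
    have h1 : t ^ 2 ≤ q ^ 2 := by
      have e : t = q * (((k : ℝ) + 1) / ((k : ℝ) + 2)) := by rw [ht]; ring
      rw [e, mul_pow]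
      have h3 : (((k : ℝ) + 1) / ((k : ℝ) + 2)) ≤ 1 := by
        rw [div_le_one (by positivity)]; linarith
      have h4 : 0 ≤ (((k : ℝ) + 1) / ((k : ℝ) + 2)) := by positivity
      have h5 : (((k : ℝ) + 1) / ((k : ℝ) + 2)) ^ 2 ≤ 1 := pow_le_one₀ h4 h3
      nlinarith [sq_nonneg q]
    nlinarith

lemma legP_sq_le (n : ℕ) (y : ℝ) (hy : y ^ 2 < 1) : legendreP n y ^ 2 ≤ 1 := by
  cases n with
  | zero => rw [legP_zero]; norm_num
  | succ k =>
    have h := energy_le k y hy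
    have : 0 < 1 - y ^ 2 := by linarith
    by_contra hc
    push Not at hc
    nlinarith [sq_nonneg (legQ k y)]

lemma legP_abs_le (n : ℕ) (y : ℝ) (hy : y ^ 2 < 1) : |legendreP n y| ≤ 1 := by
  have := legP_sq_le n y hy
  exact abs_le_one_iff_mul_self_le_one.2 (by nlinarith)

lemma legQ_abs_le (n : ℕ) (y : ℝ) (hy : y ^ 2 < 1) : |legQ n y| ≤ 1 := by
  have := energy_le n y hy
  exact abs_le_one_iff_mul_self_le_one.2
    (by nlinarith [mul_nonneg (by linarith : 0 ≤ 1 - y ^ 2) (sq_nonneg (legendreP (n + 1) y)), sq_nonneg y])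

noncomputable def legH (n : ℕ) (y : ℝ) : ℝ :=
  ((n : ℝ) + 1) * ((1 - y ^ 2) * legendreP (n + 1) y ^ 2 + legQ n y ^ 2)
    + ((1 - y ^ 2) * legendreP (n + 1) y ^ 2 - legQ n y ^ 2) / 2
    + y * legendreP (n + 1) y * legQ n y

lemma abs_ypq (y p q : ℝ) (hy : y ^ 2 < 1) (hp : |p| ≤ 1) (hq : |q| ≤ 1) : |y * p * q| ≤ 1 := by
  have h : |y| ≤ 1 := abs_le_one_iff_mul_self_le_one.2 (by nlinarith)
  rw [abs_mul, abs_mul]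
  exact mul_le_one₀ (mul_le_one₀ h (abs_nonneg _) hp) (abs_nonneg _) hq

lemma legH_step (n : ℕ) (y : ℝ) (hy : y ^ 2 < 1) :
    legH (n + 1) y ≤ legH n y + 2 / ((n : ℝ) + 1) := by
  have hp := legP_abs_le (n + 1) y hy
  have hq := legQ_abs_le n y hy
  rw [legH, legH, legQ_step, show n + 1 + 1 = n + 2 from rfl, legP_step]
  set p := legendreP (n + 1) y
  set q := legQ n y
  have hn : (0 : ℝ) < (n : ℝ) + 1 := by positivity
  set m : ℝ := (n : ℝ) + 1 with hm
  have hm2 : (n : ℝ) + 2 = m + 1 := by rw [hm]; ring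
  have hm1 : 1 ≤ m := by rw [hm]; linarith [(Nat.cast_nonneg n : (0 : ℝ) ≤ n)]
  have hc : ((n + 1 : ℕ) : ℝ) = m := by push_cast; rfl
  rw [hm2, hc]
  obtain ⟨t, ht⟩ : ∃ t, t = q * m / (m + 1) := ⟨_, rfl⟩
  rw [← ht]
  have hqt : q = t * (m + 1) / m := by rw [ht]; field_simp
  have hta : |t| ≤ 1 := by
    rw [ht, mul_div_assoc, abs_mul, abs_of_nonneg (by positivity : 0 ≤ m / (m + 1))]
    exact mul_le_one₀ hq (by positivity) (by rw [div_le_one (by positivity)]; linarith)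
  have h1 := abs_ypq y p t hy hp hta
  have h2 : t ^ 2 ≤ 1 := by rw [← sq_abs]; exact pow_le_one₀ (abs_nonneg _) hta
  have key : m * ((1 - y ^ 2) * p ^ 2 + q ^ 2) + ((1 - y ^ 2) * p ^ 2 - q ^ 2) / 2 + y * p * q
      + 2 / m - ((m + 1) * ((1 - y ^ 2) * (y * p + t) ^ 2 + (y * t - (1 - y ^ 2) * p) ^ 2)
      + ((1 - y ^ 2) * (y * p + t) ^ 2 - (y * t - (1 - y ^ 2) * p) ^ 2) / 2
      + y * (y * p + t) * (y * t - (1 - y ^ 2) * p))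
      = (2 - t ^ 2 / (2 * m) + y * p * t) / m := by
    rw [hqt]; field_simp; ring
  have h3 : t ^ 2 / (2 * m) ≤ 1 := by
    rw [div_le_one (by positivity)]; linarith
  have h4 : 0 ≤ (2 - t ^ 2 / (2 * m) + y * p * t) / m := by
    apply div_nonneg _ hn.le
    linarith [(abs_le.1 h1).1]
  linarith

lemma legH_le (n : ℕ) (y : ℝ) (hy : y ^ 2 < 1) :
    legH n y ≤ 5 * Real.sqrt ((n : ℝ) + 1) := by
  induction n with
  | zero =>
    have hp := legP_abs_le (0 + 1) y hy
    have hq := legQ_abs_le 0 y hy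
    have h := abs_ypq y _ _ hy hp hq
    have he := energy_le 0 y hy
    have := (abs_le.1 h).2
    rw [legH]
    simp only [Nat.cast_zero, zero_add, Real.sqrt_one] at *
    nlinarith [sq_nonneg (legQ 0 y), sq_nonneg y]
  | succ k ih =>
    have h := legH_step k y hy
    have hk : (0 : ℝ) ≤ k := Nat.cast_nonneg k
    have h5 : 2 / ((k : ℝ) + 1) ≤ 5 * Real.sqrt ((k : ℝ) + 1 + 1) - 5 * Real.sqrt ((k : ℝ) + 1) := by
      have ha1 : 1 ≤ Real.sqrt ((k : ℝ) + 1) := Real.one_le_sqrt.2 (by linarith)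
      have ha := Real.sq_sqrt (by positivity : 0 ≤ (k : ℝ) + 1)
      have hb := Real.sq_sqrt (by positivity : 0 ≤ (k : ℝ) + 1 + 1)
      have hb0 := Real.sqrt_nonneg ((k : ℝ) + 1 + 1)
      set a := Real.sqrt ((k : ℝ) + 1)
      set b := Real.sqrt ((k : ℝ) + 1 + 1)
      have e : b ^ 2 = a ^ 2 + 1 := by linarith
      rw [← ha, div_le_iff₀ (by positivity)]
      have hba : b ≤ 3 / 2 * a := by
        apply abs_le_of_sq_le_sq' _ (by positivity) |>.2
        nlinarith
      have hab : 0 < b - a := by nlinarith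
      have : (b - a) * (b + a) = 1 := by nlinarith
      have h6 : 1 ≤ (b - a) * (5 / 2 * a) := by
        rw [← this]; apply mul_le_mul_of_nonneg_left _ hab.le; linarith
      nlinarith [mul_nonneg hab.le (mul_nonneg (by linarith : 0 ≤ a) (by linarith : 0 ≤ a - 1))]
    push_cast
    linarith

lemma legP_decay (n : ℕ) (y : ℝ) (hy : y ^ 2 < 1) :
    (1 - y ^ 2) * legendreP (n + 1) y ^ 2 ≤ 7 / Real.sqrt ((n : ℝ) + 1) := by
  have hp := legP_abs_le (n + 1) y hy
  have hq := legQ_abs_le n y hy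
  have h := (abs_le.1 (abs_ypq y _ _ hy hp hq)).1
  have hH := legH_le n y hy
  have hk : (0 : ℝ) ≤ n := Nat.cast_nonneg n
  have ha1 : 1 ≤ Real.sqrt ((n : ℝ) + 1) := Real.one_le_sqrt.2 (by linarith)
  have ha := Real.sq_sqrt (by positivity : 0 ≤ (n : ℝ) + 1)
  rw [legH] at hH
  rw [le_div_iff₀ (by positivity)]
  set a := Real.sqrt ((n : ℝ) + 1)
  rw [← ha] at hH
  have hs : 0 ≤ (1 - y ^ 2) * legendreP (n + 1) y ^ 2 :=
    mul_nonneg (by linarith) (sq_nonneg _)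
  set X := (1 - y ^ 2) * legendreP (n + 1) y ^ 2
  have hq2 : 0 ≤ legQ n y ^ 2 := sq_nonneg _
  have h7 : a ^ 2 * X ≤ 7 * a := by
    have : legQ n y ^ 2 / 2 ≤ a ^ 2 * legQ n y ^ 2 := by nlinarith
    nlinarith
  have : a * (X * a) ≤ a * 7 := by nlinarith
  exact le_of_mul_le_mul_left this (by linarith)

lemma legP_summable (y : ℝ) (hy : y ^ 2 < 1) :
    Summable fun l : ℕ => |legendreP l y / ((l : ℝ) + 1)| := by
  rw [← summable_nat_add_iff 1]
  have hs : 0 < 1 - y ^ 2 := by linarith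
  have hS : Summable fun n : ℕ => (7 / (1 - y ^ 2) + 1) * (1 / ((n + 1 : ℕ) : ℝ) ^ (5 / 4 : ℝ)) := by
    apply Summable.mul_left
    exact (summable_nat_add_iff 1).2 (Real.summable_one_div_nat_rpow.2 (by norm_num : (1 : ℝ) < 5 / 4))
  refine Summable.of_nonneg_of_le (fun _ => abs_nonneg _) (fun n => ?_) hS
  have hd := legP_decay n y hy
  set p := legendreP (n + 1) y
  have hm : (0 : ℝ) < ((n + 1 : ℕ) : ℝ) := by positivity
  have hm' : (n : ℝ) + 1 = ((n + 1 : ℕ) : ℝ) := by push_cast; rfl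
  rw [hm'] at hd
  set m : ℝ := ((n + 1 : ℕ) : ℝ)
  set c := m ^ (1 / 4 : ℝ) with hc
  have hc0 : 0 < c := Real.rpow_pos_of_pos hm _
  have e1 : Real.sqrt m = c ^ 2 := by
    rw [Real.sqrt_eq_rpow, hc, ← Real.rpow_natCast, ← Real.rpow_mul hm.le]; norm_num
  have e2 : m ^ (5 / 4 : ℝ) = m * c := by
    rw [hc, show (5 / 4 : ℝ) = 1 + 1 / 4 by norm_num, Real.rpow_add hm, Real.rpow_one]
  rw [e1] at hd
  rw [e2, abs_div, abs_of_pos (by positivity : 0 < m + 1)]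
  have h1 : p ^ 2 * c ^ 2 ≤ 7 / (1 - y ^ 2) := by
    rw [le_div_iff₀ hs]
    rw [le_div_iff₀ (by positivity)] at hd
    linarith
  have h2 : |p| * c ≤ 7 / (1 - y ^ 2) + 1 := by
    have : (|p| * c) ^ 2 ≤ 7 / (1 - y ^ 2) := by rw [mul_pow, sq_abs]; exact h1
    nlinarith [sq_nonneg (|p| * c - 1)]
  rw [mul_one_div]
  calc |p| / (m + 1) ≤ |p| / m := by gcongr; linarith
    _ = |p| * c / (m * c) := by field_simp
    _ ≤ _ := by gcongr

lemma ps_summable (c : ℕ → ℝ) (hc : ∀ n, |c n| ≤ 1) (r : ℝ) (hr : |r| < 1) :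
    Summable fun n => c n * r ^ n := by
  refine Summable.of_norm_bounded (summable_geometric_of_abs_lt_one (r := |r|) (by simpa using hr)) fun n => ?_
  rw [Real.norm_eq_abs, abs_mul, abs_pow]
  exact mul_le_of_le_one_left (by positivity) (hc n)

lemma nat_ps_summable (r : ℝ) (hr : |r| < 1) :
    Summable fun n : ℕ => (n : ℝ) * r ^ (n - 1) := by
  rw [← summable_nat_add_iff 1]
  have h1 := summable_pow_mul_geometric_of_norm_lt_one (R := ℝ) 1 (r := r) (by simpa using hr)
  have h2 := summable_geometric_of_abs_lt_one hr
  refine (h1.add h2).congr fun n => ?_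
  simp; ring

lemma psd_summable (c : ℕ → ℝ) (hc : ∀ n, |c n| ≤ 1) (r : ℝ) (hr : |r| < 1) :
    Summable fun n : ℕ => c n * ((n : ℝ) * r ^ (n - 1)) := by
  refine Summable.of_norm_bounded (nat_ps_summable |r| (by simpa using hr)) fun n => ?_
  rw [Real.norm_eq_abs, abs_mul, abs_mul, abs_pow, Nat.abs_cast]
  exact mul_le_of_le_one_left (by positivity) (hc n)

lemma ps_hasDerivAt (c : ℕ → ℝ) (hc : ∀ n, |c n| ≤ 1) (r : ℝ) (hr : |r| < 1) :
    HasDerivAt (fun x => ∑' n, c n * x ^ n) (∑' n : ℕ, c n * ((n : ℝ) * r ^ (n - 1))) r := by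
  obtain ⟨ρ, h1, h2⟩ := exists_between hr
  have hρ : 0 < ρ := lt_of_le_of_lt (abs_nonneg r) h1
  refine hasDerivAt_tsum_of_isPreconnected (t := Set.Ioo (-ρ) ρ)
    (g := fun n x => c n * x ^ n) (g' := fun n x => c n * ((n : ℝ) * x ^ (n - 1))) (y₀ := r)
    (nat_ps_summable ρ (by rwa [abs_of_pos hρ])) isOpen_Ioo isPreconnected_Ioo
    (fun n x _ => (hasDerivAt_pow n x).const_mul _) (fun n x hx => ?_) (abs_lt.1 h1)
    (ps_summable c hc r hr) (abs_lt.1 h1)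
  have hx' : |x| ≤ ρ := (abs_lt.2 hx).le
  rw [Real.norm_eq_abs, abs_mul, abs_mul, abs_pow, Nat.abs_cast]
  refine (mul_le_of_le_one_left (by positivity) (hc n)).trans ?_
  gcongr

lemma psi_hasDerivAt (c : ℕ → ℝ) (hc : ∀ n, |c n| ≤ 1) (r : ℝ) (hr : |r| < 1) :
    HasDerivAt (fun x => ∑' n : ℕ, c n / ((n : ℝ) + 1) * x ^ (n + 1)) (∑' n : ℕ, c n * r ^ n) r := by
  obtain ⟨ρ, h1, h2⟩ := exists_between hr
  have hρ : 0 < ρ := lt_of_le_of_lt (abs_nonneg r) h1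
  refine hasDerivAt_tsum_of_isPreconnected (t := Set.Ioo (-ρ) ρ)
    (g := fun (n : ℕ) x => c n / ((n : ℝ) + 1) * x ^ (n + 1)) (g' := fun n x => c n * x ^ n) (y₀ := 0)
    (summable_geometric_of_abs_lt_one (by rwa [abs_of_pos hρ])) isOpen_Ioo isPreconnected_Ioo
    (fun n x _ => ?_) (fun n x hx => ?_) ⟨by linarith, hρ⟩
    (by simp) (abs_lt.1 h1)
  · have h := (hasDerivAt_pow (n + 1) x).const_mul (c n / ((n : ℝ) + 1))
    refine h.congr_deriv ?_
    have : (n : ℝ) + 1 ≠ 0 := by positivity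
    rw [Nat.add_sub_cancel]
    push_cast
    rw [← mul_assoc, div_mul_cancel₀ _ this]
  · have hx' : |x| ≤ ρ := (abs_lt.2 hx).le
    rw [Real.norm_eq_abs, abs_mul, abs_pow]
    refine (mul_le_of_le_one_left (by positivity) (hc n)).trans ?_
    gcongr

lemma gen_ode (y : ℝ) (hy : y ^ 2 < 1) (r : ℝ) (hr : |r| < 1) :
    (1 - 2 * r * y + r ^ 2) * (∑' n : ℕ, legendreP n y * ((n : ℝ) * r ^ (n - 1)))
      = (y - r) * ∑' n, legendreP n y * r ^ n := by
  have hc := fun n => legP_abs_le n y hy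
  have sA := ps_summable _ hc r hr
  have sD := psd_summable _ hc r hr
  set a : ℕ → ℝ := fun n => legendreP n y * r ^ n with ha
  set d : ℕ → ℝ := fun n => legendreP n y * ((n : ℝ) * r ^ (n - 1)) with hd
  have hrec : ∀ n, d (n + 2) = 2 * r * y * d (n + 1) + y * a (n + 1) - r ^ 2 * d n - r * a n := by
    intro n
    have h := legP_rec n y
    have e : r ^ 2 * d n = legendreP n y * n * r ^ (n + 1) := by
      cases n with
      | zero => simp [hd]
      | succ k => simp only [hd, Nat.add_sub_cancel]; ring
    rw [e]
    simp only [ha, hd, Nat.add_sub_cancel, show n + 2 - 1 = n + 1 from rfl]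
    push_cast
    linear_combination r ^ (n + 1) * h
  have sA1 := (summable_nat_add_iff 1).2 sA
  have sD1 := (summable_nat_add_iff 1).2 sD
  have eA := sA.sum_add_tsum_nat_add 1
  have eD := sD.sum_add_tsum_nat_add 1
  have eD2 := sD.sum_add_tsum_nat_add 2
  have hsum : ∑' n, d (n + 2) = 2 * r * y * (∑' n, d (n + 1)) + y * (∑' n, a (n + 1))
      - r ^ 2 * (∑' n, d n) - r * ∑' n, a n := by
    rw [tsum_congr hrec]
    exact ((((sD1.hasSum.mul_left (2 * r * y)).add (sA1.hasSum.mul_left y)).sub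
      (sD.hasSum.mul_left (r ^ 2))).sub (sA.hasSum.mul_left r)).tsum_eq
  have a0 : a 0 = 1 := by simp [ha, legP_zero]
  have d0 : d 0 = 0 := by simp [hd]
  have d1 : d 1 = y := by simp [hd, legP_one]
  simp only [Finset.sum_range_succ, Finset.sum_range_zero, a0, d0, d1] at eA eD eD2
  linear_combination hsum - eD2 + 2 * r * y * eD + y * eA

lemma gen_pos (y : ℝ) (hy : y ^ 2 < 1) (r : ℝ) (hr0 : 0 ≤ r) (hr : r < 1) :
    0 < ∑' n, legendreP n y * r ^ n := by
  have hc := fun n => legP_abs_le n y hy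
  set g : ℝ → ℝ := fun x => ∑' n, legendreP n y * x ^ n with hg
  have habs : ∀ x ∈ Set.Icc 0 r, |x| < 1 := fun x hx => by
    rw [abs_of_nonneg hx.1]; exact lt_of_le_of_lt hx.2 hr
  have hder := fun x hx => ps_hasDerivAt _ hc x (habs x hx)
  have g0 : g 0 = 1 := by
    rw [hg]; simp only
    rw [tsum_eq_single 0 (fun n hn => by simp [hn])]
    simp [legP_zero]
  have hF : ∀ x ∈ Set.Icc 0 r, HasDerivAt (fun x => g x ^ 2 * (1 - 2 * x * y + x ^ 2)) 0 x := by
    intro x hx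
    have h1 := (hder x hx).pow 2
    have h2 : HasDerivAt (fun x : ℝ => 1 - 2 * x * y + x ^ 2) (-(2 * y) + 2 * x) x := by
      have := (((((hasDerivAt_id x).const_mul 2).mul_const y).const_sub 1).add (hasDerivAt_pow 2 x))
      exact this.congr_deriv (by simp)
    have h3 := h1.mul h2
    refine h3.congr_deriv ?_
    have ode := gen_ode y hy x (habs x hx)
    simp only [Nat.cast_ofNat, Nat.add_one_sub_one, pow_one, Pi.pow_apply]
    linear_combination (2 * (∑' n, legendreP n y * x ^ n)) * ode
  have hconst : ∀ x ∈ Set.Icc 0 r, g x ^ 2 * (1 - 2 * x * y + x ^ 2) = 1 := by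
    intro x hx
    have := constant_of_has_deriv_right_zero (f := fun x => g x ^ 2 * (1 - 2 * x * y + x ^ 2))
      (a := 0) (b := r) (fun x hx => (hF x hx).continuousAt.continuousWithinAt)
      (fun x hx => (hF x ⟨hx.1, hx.2.le⟩).hasDerivWithinAt) x hx
    rw [this, g0]; norm_num
  have hcont : ContinuousOn g (Set.Icc 0 r) :=
    fun x hx => (hder x hx).continuousAt.continuousWithinAt
  by_contra hneg
  push Not at hneg
  have : (0 : ℝ) ∈ Set.Icc (g r) (g 0) := ⟨hneg, by rw [g0]; norm_num⟩
  obtain ⟨x, hx, hx0⟩ := intermediate_value_Icc' hr0 hcont this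
  have := hconst x hx
  rw [hx0] at this
  norm_num at this

lemma T_ge (y : ℝ) (hy : y ^ 2 < 1) (r : ℝ) (hr0 : 0 ≤ r) (hr : r < 1) :
    ∑' n : ℕ, legendreP n y / ((n : ℝ) + 1) * r ^ (n + 1) ≤ ∑' n : ℕ, legendreP n y / ((n : ℝ) + 1) := by
  have hc := fun n => legP_abs_le n y hy
  set h : ℝ → ℝ := fun x => ∑' n : ℕ, legendreP n y / ((n : ℝ) + 1) * x ^ (n + 1) with hh
  have hcont : ContinuousOn h (Set.Icc 0 1) := by
    refine continuousOn_tsum (fun n => by fun_prop) (legP_summable y hy) fun n x hx => ?_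
    rw [Real.norm_eq_abs, abs_mul, abs_pow, abs_of_nonneg hx.1]
    exact mul_le_of_le_one_right (abs_nonneg _) (pow_le_one₀ hx.1 hx.2)
  have hmono : MonotoneOn h (Set.Icc 0 1) := by
    have hd : ∀ x ∈ interior (Set.Icc (0 : ℝ) 1), HasDerivAt h (∑' n, legendreP n y * x ^ n) x := by
      intro x hx
      rw [interior_Icc] at hx
      exact psi_hasDerivAt _ hc x (by rw [abs_of_pos hx.1]; exact hx.2)
    refine monotoneOn_of_deriv_nonneg (convex_Icc 0 1) hcont
      (fun x hx => (hd x hx).differentiableAt.differentiableWithinAt) fun x hx => ?_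
    rw [(hd x hx).deriv]
    rw [interior_Icc] at hx
    exact (gen_pos y hy x hx.1.le hx.2).le
  have := hmono ⟨hr0, hr.le⟩ (⟨zero_le_one, le_rfl⟩ : (1 : ℝ) ∈ Set.Icc (0 : ℝ) 1) hr.le
  simpa [hh] using this

lemma T_trunc_tendsto (r : ℝ) (hr0 : 0 ≤ r) (hr : r < 1) :
    Tendsto (fun y => ∑' n : ℕ, legendreP n y / ((n : ℝ) + 1) * r ^ (n + 1))
      (nhdsWithin 1 (Set.Iio 1)) (𝓝 (-Real.log (1 - r))) := by
  have hs := Real.hasSum_pow_div_log_of_abs_lt_one (x := r) (by rwa [abs_of_nonneg hr0])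
  rw [← hs.tsum_eq]
  refine tendsto_tsum_of_dominated_convergence (bound := fun n => r ^ n)
    (summable_geometric_of_lt_one hr0 hr) (fun n => ?_) ?_
  · have : Tendsto (legendreP n) (nhdsWithin 1 (Set.Iio 1)) (𝓝 1) := by
      have h := ((legP_cont n).1.tendsto 1).mono_left (nhdsWithin_le_nhds (s := Set.Iio 1))
      rwa [(legP_at_one n).1] at h
    have h2 := (this.div_const ((n : ℝ) + 1)).mul_const (r ^ (n + 1))
    convert h2 using 2
    ring
  · have : Set.Ioo (0 : ℝ) 1 ∈ nhdsWithin (1 : ℝ) (Set.Iio 1) := Ioo_mem_nhdsLT zero_lt_one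
    filter_upwards [this] with y hy n
    have hp := legP_abs_le n y (by nlinarith [hy.1, hy.2])
    have hn : (0 : ℝ) ≤ n := Nat.cast_nonneg n
    rw [Real.norm_eq_abs, abs_mul, abs_div, abs_pow, abs_of_nonneg hr0,
      abs_of_pos (by positivity : (0 : ℝ) < n + 1)]
    have h1 : |legendreP n y| / ((n : ℝ) + 1) ≤ 1 := by
      rw [div_le_one (by positivity)]; linarith
    calc |legendreP n y| / ((n : ℝ) + 1) * r ^ (n + 1) ≤ 1 * r ^ n := by
          apply mul_le_mul h1 _ (by positivity) zero_le_one
          exact pow_le_pow_of_le_one hr0 hr.le (Nat.le_succ n)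
      _ = r ^ n := one_mul _

lemma T_tendsto :
    Tendsto (fun y => ∑' n : ℕ, legendreP n y / ((n : ℝ) + 1))
      (nhdsWithin 1 (Set.Iio 1)) atTop := by
  rw [tendsto_atTop]
  intro M
  set r : ℝ := 1 - Real.exp (-(|M| + 1)) with hr
  have h1 : r < 1 := by rw [hr]; linarith [Real.exp_pos (-(|M| + 1))]
  have h0 : 0 ≤ r := by
    have : Real.exp (-(|M| + 1)) ≤ 1 := Real.exp_le_one_iff.2 (by linarith [abs_nonneg M])
    rw [hr]; linarith
  have hl : -Real.log (1 - r) = |M| + 1 := by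
    rw [hr, sub_sub_cancel, Real.log_exp, neg_neg]
  have ht := T_trunc_tendsto r h0 h1
  rw [hl] at ht
  have hM : M < |M| + 1 := by linarith [le_abs_self M]
  have : Set.Ioo (0 : ℝ) 1 ∈ nhdsWithin (1 : ℝ) (Set.Iio 1) := Ioo_mem_nhdsLT zero_lt_one
  filter_upwards [this, ht.eventually (lt_mem_nhds hM)] with y hy h
  exact h.le.trans (T_ge y (by nlinarith [hy.1, hy.2]) r h0 h1)

lemma coeff_bound (w : ℝ) (hw : 0 < w) (l : ℕ) :
    |(2 * (l : ℝ) + 1) / ((l : ℝ) * ((l : ℝ) + 1) + w) - 2 / ((l : ℝ) + 1)|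
      ≤ (1 + 2 * w) / min (1 / 2) w * (1 / ((l + 1 : ℕ) : ℝ) ^ 2) := by
  have hl : (0 : ℝ) ≤ l := Nat.cast_nonneg l
  have hmin : 0 < min (1 / 2) w := lt_min (by norm_num) hw
  have hD : min (1 / 2) w * ((l : ℝ) + 1) ^ 2 ≤ (l : ℝ) * ((l : ℝ) + 1) + w := by
    cases l with
    | zero => simp
    | succ k =>
      have h1 : min (1 / 2) w ≤ 1 / 2 := min_le_left _ _
      have hk : (0 : ℝ) ≤ k := Nat.cast_nonneg k
      push_cast
      have : min (1 / 2) w * ((k : ℝ) + 1 + 1) ^ 2 ≤ 1 / 2 * ((k : ℝ) + 1 + 1) ^ 2 := by gcongr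
      nlinarith
  have hDp : 0 < (l : ℝ) * ((l : ℝ) + 1) + w := by positivity
  have e : (2 * (l : ℝ) + 1) / ((l : ℝ) * ((l : ℝ) + 1) + w) - 2 / ((l : ℝ) + 1)
      = (1 - 2 * w / ((l : ℝ) + 1)) / ((l : ℝ) * ((l : ℝ) + 1) + w) := by
    field_simp; ring
  rw [e, abs_div, abs_of_pos hDp]
  have h2 : |1 - 2 * w / ((l : ℝ) + 1)| ≤ 1 + 2 * w := by
    have h3 : 2 * w / ((l : ℝ) + 1) ≤ 2 * w := div_le_self (by positivity) (by linarith)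
    have h4 : 0 ≤ 2 * w / ((l : ℝ) + 1) := by positivity
    rw [abs_le]; constructor <;> linarith
  have e2 : (1 + 2 * w) / min (1 / 2) w * (1 / ((l + 1 : ℕ) : ℝ) ^ 2)
      = (1 + 2 * w) / (min (1 / 2) w * ((l : ℝ) + 1) ^ 2) := by
    push_cast; rw [div_mul_div_comm, mul_one]
  rw [e2]
  gcongr

/-- For fixed `w > 0`, `f(w,y) = ∑ (2l+1) P l y/(l(l+1)+w)` tends to `+∞` as `y → 1⁻`
(equivalently, the Green's function diverges to `-∞` as the angular separation tends
to `0`). -/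
theorem screened_series_blowup (w : ℝ) (hw : 0 < w) :
    Tendsto (fun y : ℝ => ∑' l : ℕ,
        (2 * (l : ℝ) + 1) * legendreP l y / ((l : ℝ) * ((l : ℝ) + 1) + w))
      (nhdsWithin 1 (Set.Iio 1)) atTop := by
  set u : ℕ → ℝ := fun l => (1 + 2 * w) / min (1 / 2) w * (1 / ((l + 1 : ℕ) : ℝ) ^ 2) with hu
  have su : Summable u := by
    apply Summable.mul_left
    exact (summable_nat_add_iff 1).2 (Real.summable_one_div_nat_pow.2 (by norm_num : 1 < 2))
  have h2 : Tendsto (fun y => 2 * (∑' n : ℕ, legendreP n y / ((n : ℝ) + 1)) + -(∑' l, u l))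
      (nhdsWithin 1 (Set.Iio 1)) atTop :=
    tendsto_atTop_add_const_right _ _ (T_tendsto.const_mul_atTop (by norm_num))
  refine tendsto_atTop_mono' _ ?_ h2
  have : Set.Ioo (0 : ℝ) 1 ∈ nhdsWithin (1 : ℝ) (Set.Iio 1) := Ioo_mem_nhdsLT zero_lt_one
  filter_upwards [this] with y hy
  have hy2 : y ^ 2 < 1 := by nlinarith [hy.1, hy.2]
  set v : ℕ → ℝ := fun l => ((2 * (l : ℝ) + 1) / ((l : ℝ) * ((l : ℝ) + 1) + w)
    - 2 / ((l : ℝ) + 1)) * legendreP l y with hv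
  have hvu : ∀ l, ‖v l‖ ≤ u l := fun l => by
    rw [Real.norm_eq_abs, hv]
    simp only
    rw [abs_mul]
    exact (mul_le_of_le_one_right (abs_nonneg _) (legP_abs_le l y hy2)).trans (coeff_bound w hw l)
  have sv : Summable v := Summable.of_norm_bounded su hvu
  have sT := (legP_summable y hy2).of_abs
  have e : ∑' l : ℕ, (2 * (l : ℝ) + 1) * legendreP l y / ((l : ℝ) * ((l : ℝ) + 1) + w)
      = 2 * (∑' n : ℕ, legendreP n y / ((n : ℝ) + 1)) + ∑' l, v l := by
    rw [← ((sT.hasSum.mul_left 2).add sv.hasSum).tsum_eq]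
    refine tsum_congr fun l => ?_
    rw [hv]; ring
  rw [e]
  have hb : ‖∑' l, v l‖ ≤ ∑' l, u l := tsum_of_norm_bounded su.hasSum hvu
  rw [Real.norm_eq_abs] at hb
  linarith [(abs_le.1 hb).1]
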